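/- arXiv:2503.00909 — 2 statements merged into one kernel-verified Lean document; each statement's English description precedes it below -/
import Mathlib

section
/- The function f : R^2 -> R defined by f(x,y) = 6 - 2 cos x - 2 cos y - 2 cos(x+y) has range exactly the interval [0,9]. -/
open SimpleGraph

noncomputable def hexSymbol : ℝ × ℝ → ℝ :=
  fun p => 6 - 2 * Real.cos p.1 - 2 * Real.cos p.2 - 2 * Real.cos (p.1 + p.2)

/-!
The symbol at `(x, y)` is `9 - ‖1 + exp (i x) + exp (-i y)‖²`, and a sum of three unit complex
numbers has norm at most `3`. The symbol is `0` where the three unit vectors are aligned and `9`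
where they are the cube roots of unity; as the plane is connected, every value in between occurs.
-/

theorem hexSymbol_eq_nine_sub_norm_sq (p : ℝ × ℝ) :
    hexSymbol p = 9 - ‖1 + Complex.exp (p.1 * Complex.I) + Complex.exp (-p.2 * Complex.I)‖ ^ 2 := by
  have norm_sq_eq : ‖1 + Complex.exp (p.1 * Complex.I) + Complex.exp (-p.2 * Complex.I)‖ ^ 2 =
      (1 + Real.cos p.1 + Real.cos p.2) ^ 2 + (Real.sin p.1 - Real.sin p.2) ^ 2 := by
    rw [← Complex.ofReal_neg, ← Complex.normSq_eq_norm_sq, Complex.normSq_apply]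
    simp only [Complex.add_re, Complex.add_im, Complex.one_re, Complex.one_im,
      Complex.exp_ofReal_mul_I_re, Complex.exp_ofReal_mul_I_im, Real.cos_neg, Real.sin_neg]
    ring
  rw [norm_sq_eq, hexSymbol, Real.cos_add]
  linear_combination Real.sin_sq_add_cos_sq p.1 + Real.sin_sq_add_cos_sq p.2

theorem hexSymbol_mem_Icc (p : ℝ × ℝ) : hexSymbol p ∈ Set.Icc (0 : ℝ) 9 := by
  rw [hexSymbol_eq_nine_sub_norm_sq]
  set z := 1 + Complex.exp (p.1 * Complex.I) + Complex.exp (-p.2 * Complex.I)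
  have norm_le_three : ‖z‖ ≤ 3 := by
    calc ‖z‖ ≤ ‖(1 : ℂ)‖ + ‖Complex.exp (p.1 * Complex.I)‖ + ‖Complex.exp (-p.2 * Complex.I)‖ :=
          norm_add₃_le
      _ = 3 := by
        rw [norm_one, ← Complex.ofReal_neg, Complex.norm_exp_ofReal_mul_I,
          Complex.norm_exp_ofReal_mul_I]
        norm_num
  have norm_sq_le_nine : ‖z‖ ^ 2 ≤ 9 :=
    (pow_le_pow_left₀ (norm_nonneg z) norm_le_three 2).trans_eq (by norm_num)
  exact ⟨sub_nonneg.mpr norm_sq_le_nine, sub_le_self 9 (sq_nonneg ‖z‖)⟩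

theorem continuous_hexSymbol : Continuous hexSymbol := by
  unfold hexSymbol
  fun_prop

theorem hexSymbol_zero : hexSymbol 0 = 0 := by
  norm_num [hexSymbol]

theorem hexSymbol_two_pi_div_three :
    hexSymbol (2 * Real.pi / 3, 2 * Real.pi / 3) = 9 := by
  have cos_eq : Real.cos (2 * Real.pi / 3) = -(1 / 2) := by
    rw [show 2 * Real.pi / 3 = Real.pi - Real.pi / 3 by ring, Real.cos_pi_sub,
      Real.cos_pi_div_three]
  simp only [hexSymbol]
  rw [← two_mul, Real.cos_two_mul, cos_eq]
  norm_num

theorem stmt13 : Set.range hexSymbol = Set.Icc (0 : ℝ) 9 := by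
  apply Set.Subset.antisymm
  · exact Set.range_subset_iff.mpr hexSymbol_mem_Icc
  · exact (isPreconnected_range continuous_hexSymbol).Icc_subset
      ⟨0, hexSymbol_zero⟩ ⟨_, hexSymbol_two_pi_div_three⟩
end

section
/- For the function f : R^2 -> R defined by f(x,y) = 6 - 2 cos x - 2 cos y - 2 cos(x+y), the set of critical values is exactly {0, 8, 9}: if the gradient of f vanishes at a point p then f(p) is 0, 8 or 9, and each of the values 0, 8, 9 is attained at some critical point. -/
open SimpleGraph

/-!
At a critical point `(x, y)` the numbers `sin x`, `sin y` and `-sin (x + y)` agree. If they vanish,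
both cosines are `±1`, which gives the values `0` and `8`. Otherwise the addition formula gives
`cos x + cos y = -1`, while equal sines give `cos x ^ 2 = cos y ^ 2`; hence
`cos x = cos y = -1 / 2`, which gives the value `9`.
-/

open Real

theorem smul_fst_add_smul_snd_eq_zero_iff {R : Type*} [CommSemiring R] [TopologicalSpace R]
    [IsTopologicalSemiring R] {a b : R} :
    a • ContinuousLinearMap.fst R R R + b • ContinuousLinearMap.snd R R R = 0 ↔
      a = 0 ∧ b = 0 := by
  constructor
  · intro h
    exact ⟨by simpa using DFunLike.congr_fun h (1, 0), by simpa using DFunLike.congr_fun h (0, 1)⟩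
  · rintro ⟨rfl, rfl⟩
    ext <;> simp

theorem cos_two_pi_div_three : cos (2 * π / 3) = -1 / 2 := by
  rw [show 2 * π / 3 = π - π / 3 by ring, cos_pi_sub, cos_pi_div_three, neg_div]

theorem sin_add_sin_add_eq_zero_and_iff (x y : ℝ) :
    sin x + sin (x + y) = 0 ∧ sin y + sin (x + y) = 0 ↔
      sin x = 0 ∧ sin y = 0 ∨ sin x = sin y ∧ cos x = -1 / 2 ∧ cos y = -1 / 2 := by
  rw [sin_add]
  constructor
  · rintro ⟨hx, hy⟩
    have sin_eq : sin x = sin y := by linarith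
    have factored : sin x * (1 + cos x + cos y) = 0 := by
      rw [← sin_eq] at hx
      linarith
    rcases mul_eq_zero.1 factored with sin_zero | cos_sum
    · exact .inl ⟨sin_zero, sin_eq ▸ sin_zero⟩
    · have cos_sq_eq : cos x ^ 2 = cos y ^ 2 := by rw [cos_sq', cos_sq', sin_eq]
      rcases sq_eq_sq_iff_eq_or_eq_neg.1 cos_sq_eq with cos_eq | cos_eq_neg
      · exact .inr ⟨sin_eq, by linarith, by linarith⟩
      · linarith
  · rintro (⟨hx, hy⟩ | ⟨sin_eq, hx, hy⟩)
    · simp [hx, hy]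
    · rw [hx, hy, sin_eq]
      constructor <;> ring

theorem hasFDerivAt_hexSymbol (p : ℝ × ℝ) :
    HasFDerivAt hexSymbol
      ((2 * (sin p.1 + sin (p.1 + p.2))) • ContinuousLinearMap.fst ℝ ℝ ℝ +
        (2 * (sin p.2 + sin (p.1 + p.2))) • ContinuousLinearMap.snd ℝ ℝ ℝ) p := by
  have hfst : HasFDerivAt (fun q : ℝ × ℝ => q.1) (.fst ℝ ℝ ℝ) p := hasFDerivAt_fst
  have hsnd : HasFDerivAt (fun q : ℝ × ℝ => q.2) (.snd ℝ ℝ ℝ) p := hasFDerivAt_snd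
  refine ((((hfst.cos.const_mul 2).const_sub 6).sub (hsnd.cos.const_mul 2)).sub
    ((hfst.add hsnd).cos.const_mul 2)).congr_fderiv ?_
  ext <;> simp <;> ring

theorem fderiv_hexSymbol_eq_zero_iff (p : ℝ × ℝ) :
    fderiv ℝ hexSymbol p = 0 ↔
      sin p.1 = 0 ∧ sin p.2 = 0 ∨
        sin p.1 = sin p.2 ∧ cos p.1 = -1 / 2 ∧ cos p.2 = -1 / 2 := by
  rw [(hasFDerivAt_hexSymbol p).fderiv, smul_fst_add_smul_snd_eq_zero_iff,
    mul_eq_zero_iff_left two_ne_zero, mul_eq_zero_iff_left two_ne_zero,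
    sin_add_sin_add_eq_zero_and_iff]

theorem hexSymbol_eq_eight_sub_add (p : ℝ × ℝ) :
    hexSymbol p = 8 - 2 * (1 + cos p.1) * (1 + cos p.2) + 2 * sin p.1 * sin p.2 := by
  rw [hexSymbol, cos_add]
  ring

theorem hexSymbol_eq_zero_or_eight_of_sin_eq_zero {p : ℝ × ℝ} (h₁ : sin p.1 = 0)
    (h₂ : sin p.2 = 0) : hexSymbol p = 0 ∨ hexSymbol p = 8 := by
  rw [hexSymbol_eq_eight_sub_add, h₁, h₂]
  rcases sin_eq_zero_iff_cos_eq.1 h₁ with hcos₁ | hcos₁ <;>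
    rcases sin_eq_zero_iff_cos_eq.1 h₂ with hcos₂ | hcos₂ <;>
    norm_num [hcos₁, hcos₂]

theorem hexSymbol_eq_nine_of_cos_eq_neg_half {p : ℝ × ℝ} (hsin : sin p.1 = sin p.2)
    (h₁ : cos p.1 = -1 / 2) (h₂ : cos p.2 = -1 / 2) : hexSymbol p = 9 := by
  have sin_sq_eq : sin p.2 ^ 2 = 3 / 4 := by
    rw [sin_sq, h₂]
    norm_num
  rw [hexSymbol_eq_eight_sub_add, h₁, h₂, hsin]
  linarith

theorem stmt14 :
    (∀ p : ℝ × ℝ, fderiv ℝ hexSymbol p = 0 → hexSymbol p ∈ ({0, 8, 9} : Set ℝ)) ∧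
    (∀ c ∈ ({0, 8, 9} : Set ℝ), ∃ p : ℝ × ℝ, fderiv ℝ hexSymbol p = 0 ∧ hexSymbol p = c) := by
  constructor
  · intro p hp
    rcases (fderiv_hexSymbol_eq_zero_iff p).1 hp with ⟨h₁, h₂⟩ | ⟨hsin, h₁, h₂⟩
    · exact (hexSymbol_eq_zero_or_eight_of_sin_eq_zero h₁ h₂).imp_right .inl
    · exact .inr (.inr (hexSymbol_eq_nine_of_cos_eq_neg_half hsin h₁ h₂))
  · rintro c (rfl | rfl | rfl)
    · exact ⟨(0, 0), (fderiv_hexSymbol_eq_zero_iff _).2 (by simp),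
        by norm_num [hexSymbol_eq_eight_sub_add]⟩
    · exact ⟨(π, 0), (fderiv_hexSymbol_eq_zero_iff _).2 (by simp),
        by simp [hexSymbol_eq_eight_sub_add]⟩
    · have hcos := cos_two_pi_div_three
      exact ⟨(2 * π / 3, 2 * π / 3),
        (fderiv_hexSymbol_eq_zero_iff _).2 (.inr ⟨rfl, hcos, hcos⟩),
        hexSymbol_eq_nine_of_cos_eq_neg_half rfl hcos hcos⟩
end
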